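/- Let (X, 𝒜) be a measurable space, μ₀ a probability measure on X, k a positive integer, y ∈ ℝ^k, and G, G_θ : X → ℝ^k measurable maps with ‖G(w)‖ ≤ M and ‖G_θ(w)‖ ≤ M for all w ∈ X, where M > 0. Define Φ_θ(w) = (1/2)‖y − G_θ(w)‖², Z = ∫_X exp(−(1/2)‖y − G(w)‖²) dμ₀(w) and Z_θ = ∫_X exp(−Φ_θ(w)) dμ₀(w). Then there exists a constant C > 0, depending only on ‖y‖ and M, such that (Z^{−1/2} − Z_θ^{−1/2})² · ∫_X exp(−Φ_θ(w)) dμ₀(w) ≤ C · ∫_X ‖G(w) − G_θ(w)‖² dμ₀(w). -/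

import Mathlib

open MeasureTheory Real

/-!
Since `r ↦ exp (-r² / 2)` is 1-Lipschitz, `|Z_G - Z_H| ≤ ∫ ‖G - H‖`, and the square of the right
side is at most `∫ ‖G - H‖²`. Jensen's inequality for `exp` gives `Z_G ≥ exp (-∫ Φ_G)`. Because
`(a^(-1/2) - b^(-1/2))² b = (√a - √b)² / a ≤ ((a - b) / a)²`, it is enough to bound the first
evidence from below, and the constant is `exp (2 ∫ Φ_G) = exp (∫ ‖y - G‖²)`.
-/

lemma sq_rpow_neg_half_sub_mul_le {a b : ℝ} (ha : 0 < a) (hb : 0 < b) :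
    (a ^ (-(1 / 2) : ℝ) - b ^ (-(1 / 2) : ℝ)) ^ 2 * b ≤ ((a - b) / a) ^ 2 := by
  have rpow_eq {x : ℝ} (hx : 0 < x) : x ^ (-(1 / 2) : ℝ) = (√x)⁻¹ := by
    rw [rpow_neg hx.le, sqrt_eq_rpow]
  obtain ⟨s, hs, rfl⟩ : ∃ s, 0 < s ∧ s ^ 2 = a := ⟨√a, sqrt_pos.2 ha, sq_sqrt ha.le⟩
  obtain ⟨t, ht, rfl⟩ : ∃ t, 0 < t ∧ t ^ 2 = b := ⟨√b, sqrt_pos.2 hb, sq_sqrt hb.le⟩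
  rw [rpow_eq ha, rpow_eq hb, sqrt_sq hs.le, sqrt_sq ht.le]
  calc (s⁻¹ - t⁻¹) ^ 2 * t ^ 2 = (s - t) ^ 2 * s ^ 2 / (s ^ 2) ^ 2 := by field_simp; ring
    _ ≤ (s - t) ^ 2 * (s + t) ^ 2 / (s ^ 2) ^ 2 := by gcongr; linarith
    _ = ((s ^ 2 - t ^ 2) / s ^ 2) ^ 2 := by ring

lemma lipschitzWith_exp_neg_half_sq : LipschitzWith 1 fun r : ℝ ↦ exp (-((1 / 2) * r ^ 2)) := by
  have hasDerivAt_exp (r : ℝ) :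
      HasDerivAt (fun r : ℝ ↦ exp (-((1 / 2) * r ^ 2))) (-(r * exp (-((1 / 2) * r ^ 2)))) r := by
    refine ((hasDerivAt_pow 2 r).const_mul (1 / 2)).fun_neg.exp.congr_deriv ?_
    push_cast
    ring
  refine lipschitzWith_of_nnnorm_deriv_le (fun r ↦ (hasDerivAt_exp r).differentiableAt) fun r ↦ ?_
  have abs_le_exp : |r| ≤ exp ((1 / 2) * r ^ 2) := by
    nlinarith [add_one_le_exp ((1 / 2) * r ^ 2), sq_nonneg (|r| - 1), sq_abs r]
  rw [(hasDerivAt_exp r).deriv, ← NNReal.coe_le_coe, coe_nnnorm, norm_neg, norm_mul, norm_eq_abs,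
    norm_eq_abs, abs_exp, exp_neg, NNReal.coe_one]
  exact mul_inv_le_one_of_le₀ abs_le_exp (exp_nonneg _)

section FiniteMeasure

variable {X E : Type*} [MeasurableSpace X] {μ : Measure X} [NormedAddCommGroup E]

/-- The potential `Φ` of a model output `g` for the data `y`; `Φ_G(w)` is `potential y (G w)`. -/
noncomputable def potential (y g : E) : ℝ := (1 / 2) * ‖y - g‖ ^ 2

/-- The evidence `Z_G`, the normalizing constant of the posterior with prior `μ`, forward map `G`
and data `y`. -/
noncomputable def evidence (μ : Measure X) (y : E) (G : X → E) : ℝ :=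
  ∫ w, exp (-potential y (G w)) ∂μ

lemma potential_nonneg (y g : E) : 0 ≤ potential y g := by
  unfold potential
  positivity

lemma lipschitzWith_exp_neg_potential (y : E) :
    LipschitzWith 1 fun g ↦ exp (-potential y g) := by
  have lipschitzWith_norm_sub : LipschitzWith 1 fun g ↦ ‖y - g‖ := by
    simp only [← dist_eq_norm]
    exact .dist_right y
  exact (lipschitzWith_exp_neg_half_sq.comp lipschitzWith_norm_sub).weaken (one_mul 1).le

variable [IsFiniteMeasure μ] {G H : X → E}

lemma integrable_exp_neg_potential (y : E) (hG : AEStronglyMeasurable G μ) :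
    Integrable (fun w ↦ exp (-potential y (G w))) μ := by
  refine .of_bound
    ((lipschitzWith_exp_neg_potential y).continuous.comp_aestronglyMeasurable hG) 1 (.of_forall ?_)
  intro w
  rw [norm_eq_abs, abs_exp, exp_le_one_iff, neg_nonpos]
  exact potential_nonneg y (G w)

lemma abs_evidence_sub_evidence_le (y : E) (hG : AEStronglyMeasurable G μ)
    (hH : AEStronglyMeasurable H μ) (hGH : Integrable (fun w ↦ G w - H w) μ) :
    |evidence μ y G - evidence μ y H| ≤ ∫ w, ‖G w - H w‖ ∂μ := by
  have norm_exp_sub_le (w : X) :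
      ‖exp (-potential y (G w)) - exp (-potential y (H w))‖ ≤ ‖G w - H w‖ := by
    simpa only [NNReal.coe_one, one_mul] using
      (lipschitzWith_exp_neg_potential y).norm_sub_le (G w) (H w)
  rw [evidence, evidence, ← integral_sub (integrable_exp_neg_potential y hG)
    (integrable_exp_neg_potential y hH)]
  exact norm_integral_le_of_norm_le hGH.norm (.of_forall norm_exp_sub_le)

lemma integrable_potential (y : E) (hG : MemLp G 2 μ) :
    Integrable (fun w ↦ potential y (G w)) μ :=
  (((memLp_const y).sub hG).integrable_norm_pow two_ne_zero).const_mul _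

end FiniteMeasure

section ProbabilityMeasure

variable {X E : Type*} [MeasurableSpace X] {μ : Measure X} [IsProbabilityMeasure μ]
  [NormedAddCommGroup E] {G H : X → E}

lemma sq_integral_norm_le (hG : MemLp G 2 μ) :
    (∫ w, ‖G w‖ ∂μ) ^ 2 ≤ ∫ w, ‖G w‖ ^ 2 ∂μ := by
  have variance_eq := ProbabilityTheory.variance_eq_sub hG.norm
  have variance_nonneg := ProbabilityTheory.variance_nonneg (fun w ↦ ‖G w‖) μ
  simp only [Pi.pow_apply] at variance_eq
  linarith

lemma sq_evidence_sub_evidence_le (y : E) (hG : MemLp G 2 μ) (hH : MemLp H 2 μ) :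
    (evidence μ y G - evidence μ y H) ^ 2 ≤ ∫ w, ‖G w - H w‖ ^ 2 ∂μ :=
  calc (evidence μ y G - evidence μ y H) ^ 2 ≤ (∫ w, ‖G w - H w‖ ∂μ) ^ 2 :=
        sq_le_sq.2 <| (abs_evidence_sub_evidence_le y hG.1 hH.1
          ((hG.sub hH).integrable one_le_two)).trans (le_abs_self _)
    _ ≤ ∫ w, ‖G w - H w‖ ^ 2 ∂μ := sq_integral_norm_le (hG.sub hH)

lemma exp_neg_integral_potential_le_evidence (y : E) (hG : MemLp G 2 μ) :
    exp (-∫ w, potential y (G w) ∂μ) ≤ evidence μ y G := by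
  rw [← integral_neg]
  exact convexOn_exp.map_integral_le continuousOn_exp isClosed_univ (by simp)
    (integrable_potential y hG).neg (integrable_exp_neg_potential y hG.1)

lemma evidence_pos (y : E) (hG : MemLp G 2 μ) : 0 < evidence μ y G :=
  (exp_pos _).trans_le (exp_neg_integral_potential_le_evidence y hG)

lemma inv_sq_evidence_le (y : E) (hG : MemLp G 2 μ) :
    (evidence μ y G ^ 2)⁻¹ ≤ exp (∫ w, ‖y - G w‖ ^ 2 ∂μ) := by
  have two_mul_integral_potential :
      ∫ w, ‖y - G w‖ ^ 2 ∂μ = 2 * ∫ w, potential y (G w) ∂μ := by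
    simp only [potential, integral_const_mul]
    ring
  calc (evidence μ y G ^ 2)⁻¹ ≤ (exp (-∫ w, potential y (G w) ∂μ) ^ 2)⁻¹ := by
        gcongr
        exact exp_neg_integral_potential_le_evidence y hG
    _ = exp (∫ w, ‖y - G w‖ ^ 2 ∂μ) := by
        rw [two_mul_integral_potential, ← exp_nat_mul, ← exp_neg]
        congr 1
        push_cast
        ring

theorem normalizing_constant_term_bound_general (y : E) (hG : MemLp G 2 μ) (hH : MemLp H 2 μ) :
    (evidence μ y G ^ (-(1 / 2) : ℝ) - evidence μ y H ^ (-(1 / 2) : ℝ)) ^ 2 * evidence μ y H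
      ≤ exp (∫ w, ‖y - G w‖ ^ 2 ∂μ) * ∫ w, ‖G w - H w‖ ^ 2 ∂μ :=
  calc _ ≤ ((evidence μ y G - evidence μ y H) / evidence μ y G) ^ 2 :=
        sq_rpow_neg_half_sub_mul_le (evidence_pos y hG) (evidence_pos y hH)
    _ = (evidence μ y G ^ 2)⁻¹ * (evidence μ y G - evidence μ y H) ^ 2 := by
        rw [div_pow, div_eq_inv_mul]
    _ ≤ _ := mul_le_mul (inv_sq_evidence_le y hG) (sq_evidence_sub_evidence_le y hG hH)
        (sq_nonneg _) (exp_nonneg _)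

lemma integral_norm_sub_sq_le (y : E) {M : ℝ} (hGM : ∀ᵐ w ∂μ, ‖G w‖ ≤ M) :
    ∫ w, ‖y - G w‖ ^ 2 ∂μ ≤ (‖y‖ + M) ^ 2 := by
  have norm_sub_sq_le : ∀ᵐ w ∂μ, ‖‖y - G w‖ ^ 2‖ ≤ (‖y‖ + M) ^ 2 := by
    filter_upwards [hGM] with w hw
    rw [norm_pow, norm_norm]
    gcongr
    exact norm_sub_le_of_le le_rfl hw
  simpa only [probReal_univ, mul_one] using
    (le_norm_self _).trans (norm_integral_le_of_norm_le_const norm_sub_sq_le)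

end ProbabilityMeasure

/-- Bound on the term `I₂` in the proof of Theorem 3.2: the normalizing-constant
contribution is controlled, with a constant depending only on `‖y‖` and `M`, by
the `L²(μ₀)`-distance of the forward maps. -/
theorem normalizing_constant_term_bound
    (k : ℕ) (hk : 0 < k) (y : EuclideanSpace ℝ (Fin k)) (M : ℝ) (hM : 0 < M) :
    ∃ C : ℝ, 0 < C ∧
      ∀ (X : Type*) [MeasurableSpace X] (μ₀ : Measure X), IsProbabilityMeasure μ₀ →
        ∀ G Gθ : X → EuclideanSpace ℝ (Fin k), Measurable G → Measurable Gθ →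
          (∀ w : X, ‖G w‖ ≤ M) → (∀ w : X, ‖Gθ w‖ ≤ M) →
          ((∫ w, Real.exp (-((1/2) * ‖y - G w‖ ^ 2)) ∂μ₀) ^ (-(1/2) : ℝ)
            - (∫ w, Real.exp (-((1/2) * ‖y - Gθ w‖ ^ 2)) ∂μ₀) ^ (-(1/2) : ℝ)) ^ 2
            * (∫ w, Real.exp (-((1/2) * ‖y - Gθ w‖ ^ 2)) ∂μ₀)
          ≤ C * ∫ w, ‖G w - Gθ w‖ ^ 2 ∂μ₀ := by
  refine ⟨exp ((‖y‖ + M) ^ 2), exp_pos _, fun X _ μ₀ _ G Gθ hG hGθ hGM hGθM ↦ ?_⟩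
  have memLp_G : MemLp G 2 μ₀ := .of_bound hG.aestronglyMeasurable M (.of_forall hGM)
  have memLp_Gθ : MemLp Gθ 2 μ₀ := .of_bound hGθ.aestronglyMeasurable M (.of_forall hGθM)
  refine (normalizing_constant_term_bound_general y memLp_G memLp_Gθ).trans ?_
  gcongr
  exact integral_norm_sub_sq_le y (.of_forall hGM)
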